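/- arXiv:math/0101039 — 3 statements merged into one kernel-verified Lean document; each statement's English description precedes it below -/
import Mathlib

section
/- Let (H, R) be a quasitriangular Hopf algebra over a field k with antipode S, let Q : H* → H, Q(p) = Σ p(R²r¹) R¹r², and define on H* the covariantised product f⋆g = Σ (R¹⇀f)·(g↼S(R²)), where · is the product of H*_R. Then ⋆ is associative, and Q(f⋆g) = Q(f)Q(g) for all f, g ∈ H*. -/
open TensorProduct LinearMap

noncomputable section

section RegularActions

variable {k H : Type*} [Field k] [Ring H] [Algebra k H]

/-- Left regular action of `H` on its dual: `(h ⇀ p)(x) = p (x * h)`. -/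
def lact (h : H) (p : Module.Dual k H) : Module.Dual k H :=
  p ∘ₗ LinearMap.mulRight k h

/-- Right regular action of `H` on its dual: `(p ↼ h)(x) = p (h * x)`. -/
def ract (h : H) (p : Module.Dual k H) : Module.Dual k H :=
  p ∘ₗ LinearMap.mulLeft k h

end RegularActions

section Legs

variable (k H : Type*) [Field k] [Ring H] [Algebra k H]

/-- `R ⊗ 1` viewed in `H ⊗ (H ⊗ H)` (the element `R₁₂`). -/
def leg12 (R : H ⊗[k] H) : H ⊗[k] (H ⊗[k] H) :=
  TensorProduct.assoc k H H H (R ⊗ₜ[k] (1 : H))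

/-- The element `R₂₃ = 1 ⊗ R` of `H ⊗ (H ⊗ H)`. -/
def leg23 (R : H ⊗[k] H) : H ⊗[k] (H ⊗[k] H) := (1 : H) ⊗ₜ[k] R

/-- The element `R₁₃` of `H ⊗ (H ⊗ H)`. -/
def leg13 (R : H ⊗[k] H) : H ⊗[k] (H ⊗[k] H) :=
  lTensor H (TensorProduct.comm k H H).toLinearMap (leg12 k H R)

end Legs

section QuasiTriangular

variable (k H : Type*) [Field k] [Ring H] [Bialgebra k H]

/-- `R` is an R-matrix making the bialgebra `H` quasitriangular:
`R` is invertible, `(Δ ⊗ id)(R) = R₁₃ R₂₃`, `(id ⊗ Δ)(R) = R₁₃ R₁₂`, and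
`Δᶜᵒᵖ(h) R = R Δ(h)` for all `h`. -/
def IsRMatrix (R : H ⊗[k] H) : Prop :=
  IsUnit R
  ∧ TensorProduct.assoc k H H H
      (rTensor H (Coalgebra.comul (R := k) (A := H)) R) = leg13 k H R * leg23 k H R
  ∧ lTensor H (Coalgebra.comul (R := k) (A := H)) R = leg13 k H R * leg12 k H R
  ∧ ∀ h : H, (TensorProduct.comm k H H) (Coalgebra.comul h) * R = R * Coalgebra.comul h

variable {k H}

/-- The convolution product on `H*`: `(f g)(h) = Σ f(h₁) g(h₂)`. -/
def conv (f g : Module.Dual k H) : Module.Dual k H :=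
  LinearMap.mul' k k ∘ₗ TensorProduct.map f g ∘ₗ (Coalgebra.comul (R := k) (A := H))

/-- The multiplication of `H*_R`: `(f · g)(h) = Σ g(h₁ R²) f(h₂ R¹)`,
i.e. `f · g = Σ (R² ⇀ g)(R¹ ⇀ f)`. -/
def mulR (R : H ⊗[k] H) (f g : Module.Dual k H) : Module.Dual k H :=
  LinearMap.mul' k k ∘ₗ TensorProduct.map g f
    ∘ₗ LinearMap.mulRight k ((TensorProduct.comm k H H) R)
    ∘ₗ (Coalgebra.comul (R := k) (A := H))

/-- The map `Q : H* → H`, `Q(p) = Σ p(R² r¹) R¹ r²`, i.e. `Q(p) = (p ⊗ id)(R₂₁ R)`. -/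
def Qmap (R : H ⊗[k] H) : Module.Dual k H →ₗ[k] H :=
  (TensorProduct.lid k H).toLinearMap
    ∘ₗ rTensor H (contractLeft k H)
    ∘ₗ (TensorProduct.assoc k (Module.Dual k H) H H).symm.toLinearMap
    ∘ₗ (TensorProduct.mk k (Module.Dual k H) (H ⊗[k] H)).flip
        ((TensorProduct.comm k H H) R * R)

end QuasiTriangular

namespace RMatrix

section Pairing

variable {k H A : Type*} [Field k] [Ring H] [Semiring A] [Algebra k A]

section Algebra

variable [Algebra k H]

/-- The linear map `H ⊗ H → A`, `x ⊗ y ↦ φ x * ψ y`. -/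
def pairing (φ ψ : H →ₗ[k] A) : H ⊗[k] H →ₗ[k] A :=
  LinearMap.mul' k A ∘ₗ TensorProduct.map φ ψ

@[simp] lemma pairing_tmul (φ ψ : H →ₗ[k] A) (x y : H) :
    pairing φ ψ (x ⊗ₜ[k] y) = φ x * ψ y := by
  simp [pairing]

lemma pairing_eq_lift (φ ψ : H →ₐ[k] A) (h : ∀ x y, Commute (φ x) (ψ y)) (z : H ⊗[k] H) :
    pairing φ.toLinearMap ψ.toLinearMap z = Algebra.TensorProduct.lift φ ψ h z := by
  induction z with
  | zero => simp
  | tmul x y => simp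
  | add x y hx hy => simp only [map_add, hx, hy]

lemma pairing_mul (φ ψ : H →ₐ[k] A) (h : ∀ x y, Commute (φ x) (ψ y)) (z w : H ⊗[k] H) :
    pairing φ.toLinearMap ψ.toLinearMap (z * w)
      = pairing φ.toLinearMap ψ.toLinearMap z * pairing φ.toLinearMap ψ.toLinearMap w := by
  simp only [pairing_eq_lift φ ψ h, map_mul]

lemma pairing_comm (φ ψ : H →ₗ[k] A) (h : ∀ x y, Commute (φ x) (ψ y)) (z : H ⊗[k] H) :
    pairing φ ψ (TensorProduct.comm k H H z) = pairing ψ φ z := by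
  induction z with
  | zero => simp
  | tmul x y => simpa using (h y x).eq
  | add x y hx hy => simp only [map_add, hx, hy]

lemma map_pairing {B : Type*} [Semiring B] [Algebra k B] (F : A →ₐ[k] B) (φ ψ : H →ₗ[k] A)
    (z : H ⊗[k] H) :
    F (pairing φ ψ z) = pairing (F.toLinearMap ∘ₗ φ) (F.toLinearMap ∘ₗ ψ) z := by
  induction z with
  | zero => simp
  | tmul x y => simp
  | add x y hx hy => simp only [map_add, hx, hy]

lemma commute_pairing {a : A} {φ ψ : H →ₗ[k] A} (hφ : ∀ x, Commute a (φ x))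
    (hψ : ∀ x, Commute a (ψ x)) (z : H ⊗[k] H) : Commute a (pairing φ ψ z) := by
  induction z with
  | zero => simp
  | tmul x y => simpa using (hφ x).mul_right (hψ y)
  | add x y hx hy => simpa only [map_add] using hx.add_right hy

lemma commute_pairing_pairing {φ ψ φ' ψ' : H →ₗ[k] A}
    (h₁ : ∀ x y, Commute (φ x) (φ' y)) (h₂ : ∀ x y, Commute (φ x) (ψ' y))
    (h₃ : ∀ x y, Commute (ψ x) (φ' y)) (h₄ : ∀ x y, Commute (ψ x) (ψ' y)) (z w : H ⊗[k] H) :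
    Commute (pairing φ ψ z) (pairing φ' ψ' w) :=
  commute_pairing (fun y => (commute_pairing (fun x => (h₁ x y).symm) (fun x => (h₃ x y).symm)
    z).symm) (fun y => (commute_pairing (fun x => (h₂ x y).symm) (fun x => (h₄ x y).symm) z).symm) w

end Algebra

variable [Bialgebra k H]

/-- The convolution of `φ` and `ψ`, i.e. `x ↦ Σ φ x₁ * ψ x₂`. -/
def convMap (φ ψ : H →ₗ[k] A) : H →ₗ[k] A := pairing φ ψ ∘ₗ Coalgebra.comul

section

variable (φ ψ χ : H →ₐ[k] A) (h₁₂ : ∀ x y, Commute (φ x) (ψ y))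
  (h₁₃ : ∀ x y, Commute (φ x) (χ y)) (h₂₃ : ∀ x y, Commute (ψ x) (χ y))

/-- The algebra map `H ⊗ (H ⊗ H) → A` given by three commuting algebra maps. -/
def lift₃ : H ⊗[k] (H ⊗[k] H) →ₐ[k] A :=
  Algebra.TensorProduct.lift φ (Algebra.TensorProduct.lift ψ χ h₂₃) fun x y => by
    rw [← pairing_eq_lift]
    exact commute_pairing (h₁₂ x) (h₁₃ x) y

lemma lift₃_tmul (x : H) (z : H ⊗[k] H) :
    lift₃ φ ψ χ h₁₂ h₁₃ h₂₃ (x ⊗ₜ z) = φ x * pairing ψ.toLinearMap χ.toLinearMap z := by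
  rw [pairing_eq_lift ψ χ h₂₃]; rfl

lemma lift₃_leg12 (R : H ⊗[k] H) :
    lift₃ φ ψ χ h₁₂ h₁₃ h₂₃ (leg12 k H R) = pairing φ.toLinearMap ψ.toLinearMap R := by
  induction R with
  | zero => simp [leg12]
  | tmul x y => simp [leg12, lift₃_tmul]
  | add x y hx hy =>
    simp only [leg12, TensorProduct.add_tmul, map_add] at hx hy ⊢
    rw [hx, hy]

lemma lift₃_leg13 (R : H ⊗[k] H) :
    lift₃ φ ψ χ h₁₂ h₁₃ h₂₃ (leg13 k H R) = pairing φ.toLinearMap χ.toLinearMap R := by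
  induction R with
  | zero => simp [leg13, leg12]
  | tmul x y => simp [leg13, leg12, lift₃_tmul]
  | add x y hx hy =>
    simp only [leg13, leg12, TensorProduct.add_tmul, map_add] at hx hy ⊢
    rw [hx, hy]

lemma lift₃_leg23 (R : H ⊗[k] H) :
    lift₃ φ ψ χ h₁₂ h₁₃ h₂₃ (leg23 k H R) = pairing ψ.toLinearMap χ.toLinearMap R := by
  simp [leg23, lift₃_tmul]

lemma lift₃_assoc (z : H ⊗[k] H) (x : H) :
    lift₃ φ ψ χ h₁₂ h₁₃ h₂₃ (TensorProduct.assoc k H H H (z ⊗ₜ x))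
      = pairing φ.toLinearMap ψ.toLinearMap z * χ x := by
  induction z with
  | zero => simp
  | tmul a b => simp [lift₃_tmul, mul_assoc]
  | add a b ha hb => simp only [TensorProduct.add_tmul, map_add, ha, hb, add_mul]

lemma lift₃_rTensor_comul (R : H ⊗[k] H) :
    lift₃ φ ψ χ h₁₂ h₁₃ h₂₃ (TensorProduct.assoc k H H H
        (rTensor H (Coalgebra.comul (R := k) (A := H)) R))
      = pairing (convMap φ.toLinearMap ψ.toLinearMap) χ.toLinearMap R := by
  induction R with
  | zero => simp
  | tmul x y => simp [lift₃_assoc, convMap]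
  | add x y hx hy => simp only [map_add, hx, hy]

lemma lift₃_lTensor_comul (R : H ⊗[k] H) :
    lift₃ φ ψ χ h₁₂ h₁₃ h₂₃ (lTensor H (Coalgebra.comul (R := k) (A := H)) R)
      = pairing φ.toLinearMap (convMap ψ.toLinearMap χ.toLinearMap) R := by
  induction R with
  | zero => simp
  | tmul x y => simp [lift₃_tmul, convMap]
  | add x y hx hy => simp only [map_add, hx, hy]

end

variable {R : H ⊗[k] H} (φ ψ χ : H →ₐ[k] A)

lemma pairing_convMap_left (hR : IsRMatrix k H R) (h₁₂ : ∀ x y, Commute (φ x) (ψ y))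
    (h₁₃ : ∀ x y, Commute (φ x) (χ y)) (h₂₃ : ∀ x y, Commute (ψ x) (χ y)) :
    pairing (convMap φ.toLinearMap ψ.toLinearMap) χ.toLinearMap R
      = pairing φ.toLinearMap χ.toLinearMap R * pairing ψ.toLinearMap χ.toLinearMap R := by
  rw [← lift₃_rTensor_comul φ ψ χ h₁₂ h₁₃ h₂₃, hR.2.1, map_mul, lift₃_leg13, lift₃_leg23]

lemma pairing_convMap_right (hR : IsRMatrix k H R) (h₁₂ : ∀ x y, Commute (φ x) (ψ y))
    (h₁₃ : ∀ x y, Commute (φ x) (χ y)) (h₂₃ : ∀ x y, Commute (ψ x) (χ y)) :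
    pairing φ.toLinearMap (convMap ψ.toLinearMap χ.toLinearMap) R
      = pairing φ.toLinearMap χ.toLinearMap R * pairing φ.toLinearMap ψ.toLinearMap R := by
  rw [← lift₃_lTensor_comul φ ψ χ h₁₂ h₁₃ h₂₃, hR.2.2.1, map_mul, lift₃_leg13, lift₃_leg12]

lemma pairing_mul_convMap (hR : IsRMatrix k H R) (h₁₂ : ∀ x y, Commute (φ x) (ψ y)) (x : H) :
    pairing φ.toLinearMap ψ.toLinearMap R * convMap φ.toLinearMap ψ.toLinearMap x
      = convMap ψ.toLinearMap φ.toLinearMap x * pairing φ.toLinearMap ψ.toLinearMap R := by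
  simp only [convMap, comp_apply]
  rw [← pairing_mul φ ψ h₁₂, ← hR.2.2.2 x, pairing_mul φ ψ h₁₂,
    pairing_comm φ.toLinearMap ψ.toLinearMap h₁₂]

/-- The Yang–Baxter equation. -/
lemma yang_baxter (hR : IsRMatrix k H R) (h₁₂ : ∀ x y, Commute (φ x) (ψ y))
    (h₁₃ : ∀ x y, Commute (φ x) (χ y)) (h₂₃ : ∀ x y, Commute (ψ x) (χ y)) :
    pairing φ.toLinearMap ψ.toLinearMap R
        * (pairing φ.toLinearMap χ.toLinearMap R * pairing ψ.toLinearMap χ.toLinearMap R)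
      = pairing ψ.toLinearMap χ.toLinearMap R
        * (pairing φ.toLinearMap χ.toLinearMap R * pairing φ.toLinearMap ψ.toLinearMap R) := by
  rw [← pairing_convMap_left φ ψ χ hR h₁₂ h₁₃ h₂₃, ← mul_assoc,
    ← pairing_convMap_left ψ φ χ hR (fun x y => (h₁₂ y x).symm) h₂₃ h₁₃]
  generalize hT : pairing φ.toLinearMap ψ.toLinearMap R = T
  have key (x : H) : T * convMap φ.toLinearMap ψ.toLinearMap x
      = convMap ψ.toLinearMap φ.toLinearMap x * T := by
    rw [← hT]; exact pairing_mul_convMap φ ψ hR h₁₂ x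
  have hTχ (y : H) : Commute (χ y) T := by
    rw [← hT]
    exact commute_pairing (fun x => (h₁₃ x y).symm) (fun x => (h₂₃ x y).symm) R
  clear hT
  generalize R = z
  induction z with
  | zero => simp
  | tmul x y =>
    simp only [pairing_tmul, AlgHom.toLinearMap_apply]
    rw [← mul_assoc, key, mul_assoc, mul_assoc, (hTχ y).eq]
  | add x y hx hy => simp only [map_add, mul_add, add_mul, hx, hy]

/-- `(id ⊗ ε)(R) = 1`. -/
lemma pairing_counit (hR : IsRMatrix k H R) :
    pairing φ.toLinearMap (Algebra.linearMap k A ∘ₗ Coalgebra.counit) R = 1 := by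
  let ε : H →ₐ[k] A := (Algebra.ofId k A).comp (Bialgebra.counitAlgHom k H)
  have hε (a : A) (x : H) : Commute a (ε x) := Algebra.commutes' _ a |>.symm
  have hεl : ε.toLinearMap = Algebra.linearMap k A ∘ₗ Coalgebra.counit := rfl
  have hc : convMap ε.toLinearMap ε.toLinearMap = ε.toLinearMap := by
    have h : (WithConv.toConv ε.toLinearMap : WithConv (H →ₗ[k] A)) = 1 := rfl
    have h' : WithConv.toConv ε.toLinearMap * WithConv.toConv ε.toLinearMap
        = WithConv.toConv ε.toLinearMap := by rw [h, one_mul]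
    exact congrArg WithConv.ofConv h'
  rw [← hεl]
  have hu : IsUnit (pairing φ.toLinearMap ε.toLinearMap R) := by
    rw [pairing_eq_lift φ ε fun x y => hε _ _]
    exact hR.1.map _
  have h := pairing_convMap_right φ ε ε hR (fun x y => hε _ _) (fun x y => hε _ _)
    (fun x y => hε _ _)
  rw [hc] at h
  exact (hu.mul_eq_left.mp h.symm)

end Pairing

section Operators

open MulOpposite

variable {k : Type*} [Field k]

section Intertwines

variable {M N P : Type*} [AddCommMonoid M] [Module k M] [AddCommMonoid N] [Module k N]
  [AddCommMonoid P] [Module k P]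

/-- `J` intertwines the operators `a` on `M` and `b` on `N`. -/
def Intertwines (J : M →ₗ[k] N) (a : (Module.End k M)ᵐᵒᵖ) (b : (Module.End k N)ᵐᵒᵖ) : Prop :=
  ∀ m, J (a.unop m) = b.unop (J m)

namespace Intertwines

lemma mul {J : M →ₗ[k] N} {a a' : (Module.End k M)ᵐᵒᵖ} {b b' : (Module.End k N)ᵐᵒᵖ}
    (h : Intertwines J a b) (h' : Intertwines J a' b') : Intertwines J (a * a') (b * b') :=
  fun m => by simp only [unop_mul, Module.End.mul_apply, h' (a.unop m), h m]

lemma comp {J : M →ₗ[k] N} {J' : N →ₗ[k] P} {a : (Module.End k M)ᵐᵒᵖ}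
    {b : (Module.End k N)ᵐᵒᵖ} {c : (Module.End k P)ᵐᵒᵖ}
    (h' : Intertwines J' b c) (h : Intertwines J a b) : Intertwines (J' ∘ₗ J) a c :=
  fun m => by simp only [comp_apply, h m, h' (J m)]

lemma pairing {H : Type*} [Ring H] [Algebra k H] {J : M →ₗ[k] N}
    {φ ψ : H →ₗ[k] (Module.End k M)ᵐᵒᵖ} {φ' ψ' : H →ₗ[k] (Module.End k N)ᵐᵒᵖ}
    (hφ : ∀ x, Intertwines J (φ x) (φ' x)) (hψ : ∀ x, Intertwines J (ψ x) (ψ' x))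
    (z : H ⊗[k] H) : Intertwines J (RMatrix.pairing φ ψ z) (RMatrix.pairing φ' ψ' z) := by
  induction z with
  | zero => intro m; simp
  | tmul x y => simpa using (hφ x).mul (hψ y)
  | add x y hx hy =>
    intro m
    simp only [map_add, unop_add, LinearMap.add_apply, hx m, hy m]

end Intertwines

variable (M N)

/-- Operators on `M` act on the left factor of `M ⊗ N`. -/
def onLeft : (Module.End k M)ᵐᵒᵖ →ₐ[k] (Module.End k (M ⊗[k] N))ᵐᵒᵖ :=
  AlgHom.op (Module.End.rTensorAlgHom k M N)

/-- Operators on `N` act on the right factor of `M ⊗ N`. -/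
def onRight : (Module.End k N)ᵐᵒᵖ →ₐ[k] (Module.End k (M ⊗[k] N))ᵐᵒᵖ :=
  AlgHom.op (Module.End.lTensorAlgHom k N M)

variable {M N}

@[simp] lemma onLeft_unop (a : (Module.End k M)ᵐᵒᵖ) :
    (onLeft M N a).unop = rTensor N a.unop := rfl

@[simp] lemma onRight_unop (a : (Module.End k N)ᵐᵒᵖ) :
    (onRight M N a).unop = lTensor M a.unop := rfl

lemma commute_onLeft_onRight (a : (Module.End k M)ᵐᵒᵖ) (b : (Module.End k N)ᵐᵒᵖ) :
    Commute (onLeft M N a) (onRight M N b) :=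
  unop_injective <| TensorProduct.ext' fun x y => by simp

lemma Intertwines.onRight {J : N →ₗ[k] P} {a : (Module.End k N)ᵐᵒᵖ} {b : (Module.End k P)ᵐᵒᵖ}
    (h : Intertwines J a b) :
    Intertwines (lTensor M J) (RMatrix.onRight M N a) (RMatrix.onRight M P b) := fun m => by
  have h' : J ∘ₗ a.unop = b.unop ∘ₗ J := LinearMap.ext h
  simp only [onRight_unop, ← lTensor_comp_apply, h']

lemma Intertwines.onLeft {J : N →ₗ[k] P} {a : (Module.End k N)ᵐᵒᵖ} {b : (Module.End k P)ᵐᵒᵖ}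
    (h : Intertwines J a b) :
    Intertwines (rTensor M J) (RMatrix.onLeft N M a) (RMatrix.onLeft P M b) := fun m => by
  have h' : J ∘ₗ a.unop = b.unop ∘ₗ J := LinearMap.ext h
  simp only [onLeft_unop, ← rTensor_comp_apply, h']

lemma intertwines_rTensor_onRight (J : M →ₗ[k] P) (a : (Module.End k N)ᵐᵒᵖ) :
    Intertwines (rTensor N J) (onRight M N a) (onRight P N a) := fun m => by
  simp only [onRight_unop, ← comp_apply, rTensor_comp_lTensor, lTensor_comp_rTensor]

lemma intertwines_lTensor_onLeft (J : N →ₗ[k] P) (a : (Module.End k M)ᵐᵒᵖ) :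
    Intertwines (lTensor M J) (onLeft M N a) (onLeft M P a) := fun m => by
  simp only [onLeft_unop, ← comp_apply, rTensor_comp_lTensor, lTensor_comp_rTensor]

lemma intertwines_assoc_left (a : (Module.End k M)ᵐᵒᵖ) :
    Intertwines (TensorProduct.assoc k M N P).toLinearMap (onLeft _ P (onLeft M N a))
      (onLeft M (N ⊗[k] P) a) := fun m => by
  induction m with
  | zero => simp
  | tmul x y =>
    induction x with
    | zero => simp
    | tmul x z => simp
    | add x z hx hz => simp only [TensorProduct.add_tmul, map_add, hx, hz]
  | add x y hx hy => simp only [map_add, hx, hy]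

lemma intertwines_assoc_middle (a : (Module.End k N)ᵐᵒᵖ) :
    Intertwines (TensorProduct.assoc k M N P).toLinearMap (onLeft _ P (onRight M N a))
      (onRight M _ (onLeft N P a)) := fun m => by
  induction m with
  | zero => simp
  | tmul x y =>
    induction x with
    | zero => simp
    | tmul x z => simp
    | add x z hx hz => simp only [TensorProduct.add_tmul, map_add, hx, hz]
  | add x y hx hy => simp only [map_add, hx, hy]

lemma intertwines_assoc_right (a : (Module.End k P)ᵐᵒᵖ) :
    Intertwines (TensorProduct.assoc k M N P).toLinearMap (onRight _ P a)
      (onRight M _ (onRight N P a)) := fun m => by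
  induction m with
  | zero => simp
  | tmul x y =>
    induction x with
    | zero => simp
    | tmul x z => simp
    | add x z hx hz => simp only [TensorProduct.add_tmul, map_add, hx, hz]
  | add x y hx hy => simp only [map_add, hx, hy]

end Intertwines

section Hopf

variable {H : Type*} [Ring H] [HopfAlgebra k H]

lemma comul_antipode :
    (Coalgebra.comul (R := k) (A := H)) ∘ₗ HopfAlgebra.antipode k (A := H)
      = convMap
          ((Algebra.TensorProduct.includeRight : H →ₐ[k] H ⊗[k] H).toLinearMap
            ∘ₗ HopfAlgebra.antipode k)
          ((Algebra.TensorProduct.includeLeft : H →ₐ[k] H ⊗[k] H).toLinearMap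
            ∘ₗ HopfAlgebra.antipode k) := by
  let S : H →ₗ[k] H := HopfAlgebra.antipode k
  let i₁ : H →ₐ[k] H ⊗[k] H := Algebra.TensorProduct.includeLeft
  let i₂ : H →ₐ[k] H ⊗[k] H := Algebra.TensorProduct.includeRight
  have cancel (i : H →ₐ[k] H ⊗[k] H) :
      WithConv.toConv (i.toLinearMap ∘ₗ S) * WithConv.toConv i.toLinearMap = 1 := by
    have h := LinearMap.algHom_comp_convMul_distrib (R := k) i (WithConv.toConv S)
      (WithConv.toConv (LinearMap.id : H →ₗ[k] H))
    rw [LinearMap.antipode_mul_id] at h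
    apply WithConv.ofConv_injective
    refine Eq.trans h.symm ?_
    ext x
    simp
  have hδ : WithConv.toConv (Coalgebra.comul (R := k) (A := H))
      = WithConv.toConv i₁.toLinearMap * WithConv.toConv i₂.toLinearMap := by
    apply WithConv.ofConv_injective
    have : LinearMap.mul' k (H ⊗[k] H) ∘ₗ TensorProduct.map i₁.toLinearMap i₂.toLinearMap
        = LinearMap.id := by
      ext x y; simp [i₁, i₂]
    rw [LinearMap.convMul_def]
    rw [← LinearMap.comp_assoc, this, LinearMap.id_comp]
  apply WithConv.toConv_injective
  refine (left_inv_eq_right_inv (a := WithConv.toConv (Coalgebra.comul (R := k) (A := H)))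
    (b := WithConv.toConv (i₂.toLinearMap ∘ₗ S) * WithConv.toConv (i₁.toLinearMap ∘ₗ S)) ?_
    LinearMap.comul_right_inv).symm
  rw [hδ, mul_assoc, ← mul_assoc _ (WithConv.toConv i₁.toLinearMap), cancel, one_mul, cancel]

variable (k H)

/-- Right multiplication as an algebra map into the opposite of the endomorphism algebra. -/
def rho : H →ₐ[k] (Module.End k H)ᵐᵒᵖ :=
  AlgHom.ofLinearMap ((opLinearEquiv k).toLinearMap ∘ₗ (LinearMap.mul k H).flip)
    (unop_injective <| LinearMap.ext fun x => by simp)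
    (fun x y => unop_injective <| LinearMap.ext fun z => by simp [mul_assoc])

/-- Left multiplication by the antipode, as an algebra map into the opposite of the
endomorphism algebra. -/
def lam : H →ₐ[k] (Module.End k H)ᵐᵒᵖ :=
  AlgHom.ofLinearMap
    ((opLinearEquiv k).toLinearMap ∘ₗ LinearMap.mul k H ∘ₗ HopfAlgebra.antipode k)
    (unop_injective <| LinearMap.ext fun x => by simp)
    (fun x y => unop_injective <| LinearMap.ext fun z => by
      simp [mul_assoc, HopfAlgebra.antipode_mul_antidistrib])

variable {k H}

@[simp] lemma rho_unop_apply (x y : H) : (rho k H x).unop y = y * x := rfl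

@[simp] lemma lam_unop_apply (x y : H) :
    (lam k H x).unop y = HopfAlgebra.antipode k x * y := rfl

lemma commute_rho_lam (x y : H) : Commute (rho k H x) (lam k H y) :=
  unop_injective <| LinearMap.ext fun z => by simp [mul_assoc]

end Hopf

end Operators

section Coproduct

open MulOpposite

variable {k H : Type*} [Field k] [Ring H] [HopfAlgebra k H]

variable (k H) in
/-- Right multiplication on the first factor of `H ⊗ N`. -/
def rhoLeft (N : Type*) [AddCommMonoid N] [Module k N] :
    H →ₐ[k] (Module.End k (H ⊗[k] N))ᵐᵒᵖ :=
  (onLeft H N).comp (rho k H)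

variable (k H) in
/-- Left multiplication by the antipode on the first factor of `H ⊗ N`. -/
def lamLeft (N : Type*) [AddCommMonoid N] [Module k N] :
    H →ₐ[k] (Module.End k (H ⊗[k] N))ᵐᵒᵖ :=
  (onLeft H N).comp (lam k H)

variable (k H) in
/-- Right multiplication on the second factor of `H ⊗ H`. -/
def rhoRight : H →ₐ[k] (Module.End k (H ⊗[k] H))ᵐᵒᵖ :=
  (onRight H H).comp (rho k H)

variable (k H) in
/-- Left multiplication by the antipode on the second factor of `H ⊗ H`. -/
def lamRight : H →ₐ[k] (Module.End k (H ⊗[k] H))ᵐᵒᵖ :=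
  (onRight H H).comp (lam k H)

variable (k H) in
/-- Right multiplication on the first factor of `H ⊗ (H ⊗ H)`. -/
abbrev rho₁ : H →ₐ[k] (Module.End k (H ⊗[k] (H ⊗[k] H)))ᵐᵒᵖ := rhoLeft k H (H ⊗[k] H)

variable (k H) in
/-- Right multiplication on the second factor of `H ⊗ (H ⊗ H)`. -/
abbrev rho₂ : H →ₐ[k] (Module.End k (H ⊗[k] (H ⊗[k] H)))ᵐᵒᵖ :=
  (onRight H (H ⊗[k] H)).comp (rhoLeft k H H)

variable (k H) in
/-- Right multiplication on the third factor of `H ⊗ (H ⊗ H)`. -/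
abbrev rho₃ : H →ₐ[k] (Module.End k (H ⊗[k] (H ⊗[k] H)))ᵐᵒᵖ :=
  (onRight H (H ⊗[k] H)).comp (rhoRight k H)

variable (k H) in
/-- Left multiplication by the antipode on the first factor of `H ⊗ (H ⊗ H)`. -/
abbrev lam₁ : H →ₐ[k] (Module.End k (H ⊗[k] (H ⊗[k] H)))ᵐᵒᵖ := lamLeft k H (H ⊗[k] H)

variable (k H) in
/-- Left multiplication by the antipode on the second factor of `H ⊗ (H ⊗ H)`. -/
abbrev lam₂ : H →ₐ[k] (Module.End k (H ⊗[k] (H ⊗[k] H)))ᵐᵒᵖ :=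
  (onRight H (H ⊗[k] H)).comp (lamLeft k H H)

section Commute

variable (x y : H)

lemma commute_rhoLeft_rhoRight : Commute (rhoLeft k H H x) (rhoRight k H y) :=
  commute_onLeft_onRight _ _

lemma commute_lamLeft_rhoRight : Commute (lamLeft k H H x) (rhoRight k H y) :=
  commute_onLeft_onRight _ _

lemma commute_rhoLeft_lamLeft (N : Type*) [AddCommMonoid N] [Module k N] :
    Commute (rhoLeft k H N x) (lamLeft k H N y) :=
  (commute_rho_lam x y).map (onLeft H N)

lemma commute_rho₁_rho₂ : Commute (rho₁ k H x) (rho₂ k H y) := commute_onLeft_onRight _ _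

lemma commute_rho₁_rho₃ : Commute (rho₁ k H x) (rho₃ k H y) := commute_onLeft_onRight _ _

lemma commute_lam₁_rho₂ : Commute (lam₁ k H x) (rho₂ k H y) := commute_onLeft_onRight _ _

lemma commute_lam₁_rho₃ : Commute (lam₁ k H x) (rho₃ k H y) := commute_onLeft_onRight _ _

lemma commute_lam₁_lam₂ : Commute (lam₁ k H x) (lam₂ k H y) := commute_onLeft_onRight _ _

lemma commute_rho₁_lam₂ : Commute (rho₁ k H x) (lam₂ k H y) := commute_onLeft_onRight _ _

lemma commute_rho₁_lam₁ : Commute (rho₁ k H x) (lam₁ k H y) := commute_rhoLeft_lamLeft x y _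

lemma commute_rho₂_rho₃ : Commute (rho₂ k H x) (rho₃ k H y) :=
  (commute_rhoLeft_rhoRight x y).map (onRight H (H ⊗[k] H))

lemma commute_lam₂_rho₃ : Commute (lam₂ k H x) (rho₃ k H y) :=
  (commute_lamLeft_rhoRight x y).map (onRight H (H ⊗[k] H))

lemma commute_rho₂_lam₂ : Commute (rho₂ k H x) (lam₂ k H y) :=
  (commute_rhoLeft_lamLeft x y H).map (onRight H (H ⊗[k] H))

end Commute

lemma pairing_rhoLeft_rhoRight_unop (z w : H ⊗[k] H) :
    (pairing (rhoLeft k H H).toLinearMap (rhoRight k H).toLinearMap z).unop w = w * z := by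
  induction z with
  | zero => simp
  | tmul x y =>
    induction w with
    | zero => simp
    | tmul a b => simp [rhoLeft, rhoRight]
    | add a b ha hb => simp only [map_add, add_mul, ha, hb]
  | add x y hx hy => simp only [map_add, unop_add, LinearMap.add_apply, mul_add, hx, hy]

lemma convMap_lamRight_lamLeft_unop (x : H) (w : H ⊗[k] H) :
    (convMap (lamRight k H).toLinearMap (lamLeft k H H).toLinearMap x).unop w
      = Coalgebra.comul (HopfAlgebra.antipode k x) * w := by
  rw [← comp_apply (Coalgebra.comul (R := k)) (HopfAlgebra.antipode k), comul_antipode]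
  simp only [convMap, comp_apply]
  generalize Coalgebra.comul (R := k) x = z
  induction z with
  | zero => simp
  | tmul x y =>
    induction w with
    | zero => simp
    | tmul a b => simp [lamLeft, lamRight]
    | add a b ha hb => simp only [map_add, mul_add, ha, hb]
  | add x y hx hy => simp only [map_add, unop_add, LinearMap.add_apply, add_mul, hx, hy]

lemma intertwines_comul_rho (x : H) :
    Intertwines (Coalgebra.comul (R := k)) (rho k H x)
      (convMap (rhoLeft k H H).toLinearMap (rhoRight k H).toLinearMap x) := fun m => by
  simp [convMap, pairing_rhoLeft_rhoRight_unop]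

lemma intertwines_comul_lam (x : H) :
    Intertwines (Coalgebra.comul (R := k)) (lam k H x)
      (convMap (lamRight k H).toLinearMap (lamLeft k H H).toLinearMap x) := fun m => by
  simp [convMap_lamRight_lamLeft_unop]

/-- `Δ ⊗ id` as a map to `H ⊗ (H ⊗ H)`. -/
def comulLeft : H ⊗[k] H →ₗ[k] H ⊗[k] (H ⊗[k] H) :=
  (TensorProduct.assoc k H H H).toLinearMap ∘ₗ rTensor H Coalgebra.comul

/-- `id ⊗ Δ`. -/
def comulRight : H ⊗[k] H →ₗ[k] H ⊗[k] (H ⊗[k] H) := lTensor H Coalgebra.comul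

lemma intertwines_comulRight_rhoLeft (x : H) :
    Intertwines comulRight (rhoLeft k H H x) (rho₁ k H x) :=
  intertwines_lTensor_onLeft _ _

lemma intertwines_comulRight_lamLeft (x : H) :
    Intertwines comulRight (lamLeft k H H x) (lam₁ k H x) :=
  intertwines_lTensor_onLeft _ _

lemma intertwines_comulRight_rhoRight (x : H) :
    Intertwines comulRight (rhoRight k H x)
      (convMap (rho₂ k H).toLinearMap (rho₃ k H).toLinearMap x) := by
  have h := (intertwines_comul_rho (k := k) x).onRight (M := H)
  simp only [convMap, comp_apply, map_pairing] at h ⊢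
  exact h

lemma intertwines_comulLeft_rhoRight (x : H) :
    Intertwines comulLeft (rhoRight k H x) (rho₃ k H x) :=
  (intertwines_assoc_right _).comp (intertwines_rTensor_onRight _ _)

lemma intertwines_comulLeft_rhoLeft (x : H) :
    Intertwines comulLeft (rhoLeft k H H x)
      (convMap (rho₁ k H).toLinearMap (rho₂ k H).toLinearMap x) := by
  have h := (intertwines_comul_rho (k := k) x).onLeft (M := H)
  simp only [convMap, comp_apply, map_pairing] at h ⊢
  exact Intertwines.comp (Intertwines.pairing (fun _ => intertwines_assoc_left _)
    (fun _ => intertwines_assoc_middle _) _) h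

lemma intertwines_comulLeft_lamLeft (x : H) :
    Intertwines comulLeft (lamLeft k H H x)
      (convMap (lam₂ k H).toLinearMap (lam₁ k H).toLinearMap x) := by
  have h := (intertwines_comul_lam (k := k) x).onLeft (M := H)
  simp only [convMap, comp_apply, map_pairing] at h ⊢
  exact Intertwines.comp (Intertwines.pairing (fun _ => intertwines_assoc_middle _)
    (fun _ => intertwines_assoc_left _) _) h

/-- The operator `x ⊗ y ↦ Σ S(R²) x r² ⊗ y r¹ R¹`. -/
def twist (R : H ⊗[k] H) : (Module.End k (H ⊗[k] H))ᵐᵒᵖ :=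
  pairing (rhoRight k H).toLinearMap (rhoLeft k H H).toLinearMap R
    * pairing (rhoRight k H).toLinearMap (lamLeft k H H).toLinearMap R

/-- The coproduct `x ↦ Σ S(R²) x₁ r² ⊗ x₂ r¹ R¹` dual to the covariantised product. -/
def starComul (R : H ⊗[k] H) : H →ₗ[k] H ⊗[k] H := (twist R).unop ∘ₗ Coalgebra.comul

variable {R : H ⊗[k] H}

lemma onRight_twist : onRight H _ (twist R)
    = pairing (rho₃ k H).toLinearMap (rho₂ k H).toLinearMap R
      * pairing (rho₃ k H).toLinearMap (lam₂ k H).toLinearMap R := by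
  simp only [twist, map_mul, map_pairing]
  rfl

lemma intertwines_assoc_twist :
    Intertwines (TensorProduct.assoc k H H H).toLinearMap (onLeft _ H (twist R))
      (pairing (rho₂ k H).toLinearMap (rho₁ k H).toLinearMap R
        * pairing (rho₂ k H).toLinearMap (lam₁ k H).toLinearMap R) := by
  simp only [twist, map_mul, map_pairing]
  exact (Intertwines.pairing (fun _ => intertwines_assoc_middle _)
    (fun _ => intertwines_assoc_left _) _).mul
    (Intertwines.pairing (fun _ => intertwines_assoc_middle _)
    (fun _ => intertwines_assoc_left _) _)

lemma assoc_rTensor_starComul (w : H ⊗[k] H) :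
    TensorProduct.assoc k H H H (rTensor H (starComul R) w)
      = (pairing (rho₂ k H).toLinearMap (rho₁ k H).toLinearMap R
        * pairing (rho₂ k H).toLinearMap (lam₁ k H).toLinearMap R).unop (comulLeft w) := by
  rw [starComul, rTensor_comp_apply]
  exact intertwines_assoc_twist _

lemma intertwines_comulLeft_twist (hR : IsRMatrix k H R) :
    Intertwines comulLeft (twist R)
      (pairing (rho₃ k H).toLinearMap (rho₂ k H).toLinearMap R
        * pairing (rho₃ k H).toLinearMap (rho₁ k H).toLinearMap R
        * (pairing (rho₃ k H).toLinearMap (lam₁ k H).toLinearMap R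
          * pairing (rho₃ k H).toLinearMap (lam₂ k H).toLinearMap R)) := by
  rw [← pairing_convMap_right _ _ _ hR (fun x y => (commute_rho₁_rho₃ y x).symm)
      (fun x y => (commute_rho₂_rho₃ y x).symm) commute_rho₁_rho₂,
    ← pairing_convMap_right _ _ _ hR (fun x y => (commute_lam₂_rho₃ y x).symm)
      (fun x y => (commute_lam₁_rho₃ y x).symm) (fun x y => (commute_lam₁_lam₂ y x).symm)]
  exact (Intertwines.pairing intertwines_comulLeft_rhoRight intertwines_comulLeft_rhoLeft _).mul
    (Intertwines.pairing intertwines_comulLeft_rhoRight intertwines_comulLeft_lamLeft _)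

lemma intertwines_comulRight_twist (hR : IsRMatrix k H R) :
    Intertwines comulRight (twist R)
      (pairing (rho₂ k H).toLinearMap (rho₁ k H).toLinearMap R
        * pairing (rho₃ k H).toLinearMap (rho₁ k H).toLinearMap R
        * (pairing (rho₂ k H).toLinearMap (lam₁ k H).toLinearMap R
          * pairing (rho₃ k H).toLinearMap (lam₁ k H).toLinearMap R)) := by
  rw [← pairing_convMap_left _ _ _ hR commute_rho₂_rho₃
      (fun x y => (commute_rho₁_rho₂ y x).symm) (fun x y => (commute_rho₁_rho₃ y x).symm),
    ← pairing_convMap_left _ _ _ hR commute_rho₂_rho₃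
      (fun x y => (commute_lam₁_rho₂ y x).symm) (fun x y => (commute_lam₁_rho₃ y x).symm)]
  exact (Intertwines.pairing intertwines_comulRight_rhoRight intertwines_comulRight_rhoLeft _).mul
    (Intertwines.pairing intertwines_comulRight_rhoRight intertwines_comulRight_lamLeft _)

/-- The coproduct dual to the covariantised product is coassociative. -/
lemma starComul_coassoc (hR : IsRMatrix k H R) (x : H) :
    TensorProduct.assoc k H H H (rTensor H (starComul R) (starComul R x))
      = lTensor H (starComul R) (starComul R x) := by
  have hΔ : comulLeft (Coalgebra.comul (R := k) x) = comulRight (Coalgebra.comul (R := k) x) :=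
    Coalgebra.coassoc_apply x
  have hl : lTensor H (starComul R) (starComul R x)
      = (onRight H _ (twist R)).unop (comulRight (starComul R x)) := by
    conv_lhs => rw [starComul, lTensor_comp_apply]
    rfl
  rw [hl, assoc_rTensor_starComul, onRight_twist, starComul, comp_apply,
    intertwines_comulLeft_twist hR, intertwines_comulRight_twist hR, hΔ,
    ← Module.End.mul_apply, ← Module.End.mul_apply, ← unop_mul, ← unop_mul]
  congr 2
  have h₁ := yang_baxter (rho₃ k H) (rho₂ k H) (rho₁ k H) hR
    (fun x y => (commute_rho₂_rho₃ y x).symm) (fun x y => (commute_rho₁_rho₃ y x).symm)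
    (fun x y => (commute_rho₁_rho₂ y x).symm)
  have h₂ := yang_baxter (rho₃ k H) (rho₂ k H) (lam₁ k H) hR
    (fun x y => (commute_rho₂_rho₃ y x).symm) (fun x y => (commute_lam₁_rho₃ y x).symm)
    (fun x y => (commute_lam₁_rho₂ y x).symm)
  have h₃ : Commute (pairing (rho₂ k H).toLinearMap (rho₁ k H).toLinearMap R)
      (pairing (rho₃ k H).toLinearMap (lam₁ k H).toLinearMap R) :=
    commute_pairing_pairing commute_rho₂_rho₃ (fun x y => (commute_lam₁_rho₂ y x).symm)
      commute_rho₁_rho₃ commute_rho₁_lam₁ _ _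
  have h₄ : Commute (pairing (rho₂ k H).toLinearMap (rho₁ k H).toLinearMap R)
      (pairing (rho₃ k H).toLinearMap (lam₂ k H).toLinearMap R) :=
    commute_pairing_pairing commute_rho₂_rho₃ commute_rho₂_lam₂
      commute_rho₁_rho₃ commute_rho₁_lam₂ _ _
  have h₅ : Commute (pairing (rho₂ k H).toLinearMap (lam₁ k H).toLinearMap R)
      (pairing (rho₃ k H).toLinearMap (lam₂ k H).toLinearMap R) :=
    commute_pairing_pairing commute_rho₂_rho₃ commute_rho₂_lam₂
      commute_lam₁_rho₃ commute_lam₁_lam₂ _ _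
  generalize pairing (rho₂ k H).toLinearMap (rho₁ k H).toLinearMap R = a at *
  generalize pairing (rho₃ k H).toLinearMap (rho₁ k H).toLinearMap R = b at *
  generalize pairing (rho₂ k H).toLinearMap (lam₁ k H).toLinearMap R = c at *
  generalize pairing (rho₃ k H).toLinearMap (lam₁ k H).toLinearMap R = d at *
  generalize pairing (rho₃ k H).toLinearMap (rho₂ k H).toLinearMap R = e at *
  generalize pairing (rho₃ k H).toLinearMap (lam₂ k H).toLinearMap R = f at *
  calc e * b * (d * f) * (a * c)
      = e * b * d * (f * a) * c := by simp only [mul_assoc]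
    _ = e * b * (d * a) * (f * c) := by rw [← h₄.eq]; simp only [mul_assoc]
    _ = e * (b * a) * d * (c * f) := by rw [← h₃.eq, ← h₅.eq]; simp only [mul_assoc]
    _ = a * b * (e * (d * c)) * f := by rw [h₁]; simp only [mul_assoc]
    _ = a * b * (c * d) * (e * f) := by rw [h₂]; simp only [mul_assoc]

/-- The coproduct of the first leg of `R₂₁ R`. -/
lemma comulLeft_comm_mul (hR : IsRMatrix k H R) :
    comulLeft (TensorProduct.comm k H H R * R)
      = (pairing (rho₃ k H).toLinearMap (rho₂ k H).toLinearMap R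
        * pairing (rho₃ k H).toLinearMap (rho₁ k H).toLinearMap R
        * (pairing (rho₁ k H).toLinearMap (rho₃ k H).toLinearMap R
          * pairing (rho₂ k H).toLinearMap (rho₃ k H).toLinearMap R)).unop 1 := by
  have h : TensorProduct.comm k H H R * R
      = (pairing (rhoRight k H).toLinearMap (rhoLeft k H H).toLinearMap R
        * pairing (rhoLeft k H H).toLinearMap (rhoRight k H).toLinearMap R).unop 1 := by
    rw [← pairing_comm (rhoLeft k H H).toLinearMap (rhoRight k H).toLinearMap
      commute_rhoLeft_rhoRight, ← pairing_mul _ _ commute_rhoLeft_rhoRight,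
      pairing_rhoLeft_rhoRight_unop, one_mul]
  have h₁ : comulLeft (1 : H ⊗[k] H) = 1 := by
    simp [comulLeft, Algebra.TensorProduct.one_def]
  rw [h, ← pairing_convMap_right _ _ _ hR (fun x y => (commute_rho₁_rho₃ y x).symm)
      (fun x y => (commute_rho₂_rho₃ y x).symm) commute_rho₁_rho₂,
    ← pairing_convMap_left _ _ _ hR commute_rho₁_rho₂ commute_rho₁_rho₃ commute_rho₂_rho₃, ← h₁]
  exact (Intertwines.pairing intertwines_comulLeft_rhoRight intertwines_comulLeft_rhoLeft _).mul
    (Intertwines.pairing intertwines_comulLeft_rhoLeft intertwines_comulLeft_rhoRight _) _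

lemma intertwines_mk_onRight (a : (Module.End k (H ⊗[k] H))ᵐᵒᵖ) :
    Intertwines (TensorProduct.mk k H (H ⊗[k] H) 1) a (onRight H _ a) := fun m => by simp

lemma convMap_lam_rho_unop_one (x : H) :
    (convMap (lam k H).toLinearMap (rho k H).toLinearMap x).unop (1 : H)
      = algebraMap k H (Coalgebra.counit x) := by
  rw [← HopfAlgebra.mul_antipode_rTensor_comul_apply]
  simp only [convMap, comp_apply]
  generalize Coalgebra.comul (R := k) x = z
  induction z with
  | zero => simp
  | tmul x y => simp
  | add x y hx hy => simp only [map_add, unop_add, LinearMap.add_apply, hx, hy]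

lemma intertwines_mk_counit (x : H) :
    Intertwines (TensorProduct.mk k H (H ⊗[k] H) 1)
      ((Algebra.linearMap k (Module.End k (H ⊗[k] H))ᵐᵒᵖ ∘ₗ Coalgebra.counit) x)
      (convMap (lam₁ k H).toLinearMap (rho₁ k H).toLinearMap x) := fun m => by
  have h : convMap (lam₁ k H).toLinearMap (rho₁ k H).toLinearMap x
      = onLeft H _ (convMap (lam k H).toLinearMap (rho k H).toLinearMap x) := by
    simp only [convMap, comp_apply, map_pairing]
    rfl
  rw [h]
  simp [convMap_lam_rho_unop_one, Algebra.algebraMap_eq_smul_one,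
    TensorProduct.smul_tmul']

lemma pairing_mul_pairing_unop_one_tmul (hR : IsRMatrix k H R) (w : H ⊗[k] H) :
    (pairing (rho₂ k H).toLinearMap (rho₁ k H).toLinearMap R
      * pairing (rho₂ k H).toLinearMap (lam₁ k H).toLinearMap R).unop ((1 : H) ⊗ₜ[k] w)
      = (1 : H) ⊗ₜ[k] w := by
  rw [← pairing_convMap_right _ _ _ hR (fun x y => (commute_lam₁_rho₂ y x).symm)
    (fun x y => (commute_rho₁_rho₂ y x).symm) (fun x y => (commute_rho₁_lam₁ y x).symm)]
  have h := Intertwines.pairing (φ := (rhoLeft k H H).toLinearMap)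
    (φ' := (rho₂ k H).toLinearMap) (fun x => intertwines_mk_onRight _)
    (intertwines_mk_counit (k := k) (H := H)) R w
  rw [pairing_counit _ hR] at h
  exact h.symm

/-- The element `R₂₁ R` is multiplicative for `starComul`. -/
lemma assoc_rTensor_starComul_comm_mul (hR : IsRMatrix k H R) :
    TensorProduct.assoc k H H H (rTensor H (starComul R) (TensorProduct.comm k H H R * R))
      = (pairing (rho₁ k H).toLinearMap (rho₃ k H).toLinearMap
          (TensorProduct.comm k H H R * R)).unop
          ((1 : H) ⊗ₜ[k] (TensorProduct.comm k H H R * R)) := by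
  have h₀ : (1 : H) ⊗ₜ[k] (TensorProduct.comm k H H R * R)
      = (pairing (rho₃ k H).toLinearMap (rho₂ k H).toLinearMap R
        * pairing (rho₂ k H).toLinearMap (rho₃ k H).toLinearMap R).unop 1 := by
    have h : pairing (rho₃ k H).toLinearMap (rho₂ k H).toLinearMap R
        * pairing (rho₂ k H).toLinearMap (rho₃ k H).toLinearMap R
        = onRight H _ (pairing (rhoLeft k H H).toLinearMap (rhoRight k H).toLinearMap
          (TensorProduct.comm k H H R * R)) := by
      rw [← pairing_comm (rho₂ k H).toLinearMap (rho₃ k H).toLinearMap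
        commute_rho₂_rho₃, ← pairing_mul _ _ commute_rho₂_rho₃, map_pairing]
      rfl
    rw [h, Algebra.TensorProduct.one_def, onRight_unop, lTensor_tmul,
      pairing_rhoLeft_rhoRight_unop, one_mul]
  rw [assoc_rTensor_starComul, comulLeft_comm_mul hR,
    ← pairing_mul_pairing_unop_one_tmul hR (TensorProduct.comm k H H R * R), h₀,
    pairing_mul _ _ commute_rho₁_rho₃,
    pairing_comm (rho₁ k H).toLinearMap (rho₃ k H).toLinearMap commute_rho₁_rho₃]
  simp only [← Module.End.mul_apply, ← unop_mul]
  congr 2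
  have h₁ := yang_baxter (rho₂ k H) (rho₁ k H) (rho₃ k H) hR
    (fun x y => (commute_rho₁_rho₂ y x).symm) commute_rho₂_rho₃ commute_rho₁_rho₃
  have h₂ := yang_baxter (rho₂ k H) (rho₃ k H) (rho₁ k H) hR
    commute_rho₂_rho₃ (fun x y => (commute_rho₁_rho₂ y x).symm)
    (fun x y => (commute_rho₁_rho₃ y x).symm)
  have h₃ : Commute (pairing (rho₂ k H).toLinearMap (lam₁ k H).toLinearMap R)
      (pairing (rho₃ k H).toLinearMap (rho₁ k H).toLinearMap R) :=
    commute_pairing_pairing commute_rho₂_rho₃ (fun x y => (commute_rho₁_rho₂ y x).symm)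
      commute_lam₁_rho₃ (fun x y => (commute_rho₁_lam₁ y x).symm) _ _
  have h₄ : Commute (pairing (rho₂ k H).toLinearMap (lam₁ k H).toLinearMap R)
      (pairing (rho₁ k H).toLinearMap (rho₃ k H).toLinearMap R) :=
    commute_pairing_pairing (fun x y => (commute_rho₁_rho₂ y x).symm) commute_rho₂_rho₃
      (fun x y => (commute_rho₁_lam₁ y x).symm) commute_lam₁_rho₃ _ _
  generalize pairing (rho₂ k H).toLinearMap (rho₁ k H).toLinearMap R = a at *
  generalize pairing (rho₃ k H).toLinearMap (rho₁ k H).toLinearMap R = b at *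
  generalize pairing (rho₂ k H).toLinearMap (lam₁ k H).toLinearMap R = c at *
  generalize pairing (rho₁ k H).toLinearMap (rho₃ k H).toLinearMap R = d at *
  generalize pairing (rho₃ k H).toLinearMap (rho₂ k H).toLinearMap R = e at *
  generalize pairing (rho₂ k H).toLinearMap (rho₃ k H).toLinearMap R = f at *
  calc e * b * (d * f) * (a * c)
      = e * b * (d * (f * a)) * c := by simp only [mul_assoc]
    _ = e * (b * (a * f)) * d * c := by rw [← h₁]; simp only [mul_assoc]
    _ = e * f * a * b * (d * c) := by rw [← h₂]; simp only [mul_assoc]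
    _ = e * f * a * (b * c) * d := by rw [← h₄.eq]; simp only [mul_assoc]
    _ = e * f * (a * c) * (b * d) := by rw [← h₃.eq]; simp only [mul_assoc]

lemma Qmap_apply (p : Module.Dual k H) :
    Qmap R p = TensorProduct.lid k H (rTensor H p (TensorProduct.comm k H H R * R)) := by
  simp only [Qmap, comp_apply, flip_apply, mk_apply]
  generalize TensorProduct.comm k H H R * R = z
  induction z with
  | zero => simp
  | tmul x y => simp
  | add x y hx hy => simp only [TensorProduct.tmul_add, map_add, hx, hy]

lemma lid_map_pairing_rho₁_rho₃_unop (f g : Module.Dual k H) (z w : H ⊗[k] H) :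
    TensorProduct.lid k H (TensorProduct.map g
        ((TensorProduct.lid k H).toLinearMap ∘ₗ rTensor H f)
        ((pairing (rho₁ k H).toLinearMap (rho₃ k H).toLinearMap z).unop ((1 : H) ⊗ₜ[k] w)))
      = TensorProduct.lid k H (rTensor H f w) * TensorProduct.lid k H (rTensor H g z) := by
  induction z with
  | zero => simp
  | tmul x y =>
    induction w with
    | zero => simp
    | tmul a b => simp [rhoLeft, rhoRight, smul_smul, mul_comm]
    | add a b ha hb => simp only [TensorProduct.tmul_add, map_add, add_mul, ha, hb]
  | add x y hx hy => simp only [map_add, unop_add, LinearMap.add_apply, mul_add, hx, hy]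

lemma Qmap_starComul (hR : IsRMatrix k H R) (f g : Module.Dual k H) :
    Qmap R (LinearMap.mul' k k ∘ₗ TensorProduct.map g f ∘ₗ starComul R)
      = Qmap R f * Qmap R g := by
  have h : (TensorProduct.lid k H).toLinearMap
        ∘ₗ rTensor H (LinearMap.mul' k k ∘ₗ TensorProduct.map g f)
      = (TensorProduct.lid k H).toLinearMap
        ∘ₗ TensorProduct.map g ((TensorProduct.lid k H).toLinearMap ∘ₗ rTensor H f)
        ∘ₗ (TensorProduct.assoc k H H H).toLinearMap := by
    ext x y z
    simp [smul_smul, mul_comm]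
  rw [Qmap_apply, Qmap_apply, Qmap_apply, ← lid_map_pairing_rho₁_rho₃_unop,
    ← assoc_rTensor_starComul_comm_mul hR, ← LinearMap.comp_assoc, rTensor_comp_apply]
  exact LinearMap.congr_fun h _

lemma sum_mulR_lact_ract {ι : Type*} [Fintype ι] (a b : ι → H) (hab : R = ∑ i, a i ⊗ₜ[k] b i)
    (f g : Module.Dual k H) :
    ∑ i, mulR R (lact (a i) f) (ract (HopfAlgebra.antipode (R := k) (b i)) g)
      = LinearMap.mul' k k ∘ₗ TensorProduct.map g f ∘ₗ starComul R := by
  have h (w : H ⊗[k] H) :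
      (pairing (rhoRight k H).toLinearMap (lamLeft k H H).toLinearMap R).unop w
        = ∑ i, TensorProduct.map (LinearMap.mulLeft k (HopfAlgebra.antipode k (b i)))
          (LinearMap.mulRight k (a i)) w := by
    conv_lhs => rw [hab]
    simp only [map_sum, pairing_tmul, Finset.unop_sum, LinearMap.sum_apply]
    refine Finset.sum_congr rfl fun i _ => ?_
    induction w with
    | zero => simp
    | tmul x y => simp [rhoRight, lamLeft]
    | add x y hx hy => simp only [map_add, hx, hy]
  ext x
  simp only [LinearMap.sum_apply, mulR, lact, ract, comp_apply, starComul, twist, unop_mul,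
    Module.End.mul_apply, h, map_sum, TensorProduct.map_comp, LinearMap.mulRight_apply]
  rw [← pairing_comm (rhoLeft k H H).toLinearMap (rhoRight k H).toLinearMap
    commute_rhoLeft_rhoRight, pairing_rhoLeft_rhoRight_unop]

end Coproduct

end RMatrix

/-- Let `(H, R)` be a quasitriangular Hopf algebra over a field `k` with
antipode `S`, let `Q : H* → H`, `Q(p) = Σ p(R² r¹) R¹ r²`, and let `⋆` be the
covariantised product on `H*`, `f ⋆ g = Σ (R¹ ⇀ f) · (g ↼ S(R²))` (where `·` is the
product of `H*_R`).  Then `⋆` is associative, and `Q(f ⋆ g) = Q(f) Q(g)` for all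
`f, g ∈ H*`. -/
theorem covariantised_product_associative_and_Qmap_mul
    {k H : Type*} [Field k] [Ring H] [HopfAlgebra k H]
    (R : H ⊗[k] H) (hR : IsRMatrix k H R)
    (star : Module.Dual k H → Module.Dual k H → Module.Dual k H)
    (hstar : ∀ (f g : Module.Dual k H) (n : ℕ) (R₁ R₂ : Fin n → H),
      R = ∑ i, R₁ i ⊗ₜ[k] R₂ i →
      star f g = ∑ i, mulR R (lact (R₁ i) f)
        (ract (HopfAlgebra.antipode (R := k) (R₂ i)) g)) :
    (∀ f g l : Module.Dual k H, star (star f g) l = star f (star g l))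
    ∧ (∀ f g : Module.Dual k H, Qmap R (star f g) = Qmap R f * Qmap R g) := by
  have key (f g : Module.Dual k H) :
      star f g = LinearMap.mul' k k ∘ₗ TensorProduct.map g f ∘ₗ RMatrix.starComul R := by
    obtain ⟨n, a, b, hab⟩ := TensorProduct.exists_sum_tmul_eq R
    rw [hstar f g n a b hab, RMatrix.sum_mulR_lact_ract a b hab]
  refine ⟨fun f g l => ?_, fun f g => ?_⟩
  · ext x
    have h₁ : LinearMap.mul' k k ∘ₗ TensorProduct.map l (star f g)
        = LinearMap.mul' k k ∘ₗ TensorProduct.map l (LinearMap.mul' k k ∘ₗ TensorProduct.map g f)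
          ∘ₗ lTensor H (RMatrix.starComul R) := by
      rw [key]; ext; simp
    have h₂ : LinearMap.mul' k k ∘ₗ TensorProduct.map (star g l) f
        = LinearMap.mul' k k ∘ₗ TensorProduct.map l (LinearMap.mul' k k ∘ₗ TensorProduct.map g f)
          ∘ₗ (TensorProduct.assoc k H H H).toLinearMap ∘ₗ rTensor H (RMatrix.starComul R) := by
      have h₃ : LinearMap.mul' k k
            ∘ₗ TensorProduct.map (LinearMap.mul' k k ∘ₗ TensorProduct.map l g) f
          = LinearMap.mul' k k
            ∘ₗ TensorProduct.map l (LinearMap.mul' k k ∘ₗ TensorProduct.map g f)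
            ∘ₗ (TensorProduct.assoc k H H H).toLinearMap := by
        ext; simp [mul_assoc]
      have h₄ := congrArg (· ∘ₗ rTensor H (RMatrix.starComul R)) h₃
      simp only [LinearMap.comp_assoc] at h₄
      rw [← h₄, key]; ext; simp
    rw [key (star f g) l, key f (star g l), ← LinearMap.comp_assoc, ← LinearMap.comp_assoc,
      h₁, h₂]
    simp only [comp_apply, LinearEquiv.coe_coe, RMatrix.starComul_coassoc hR]
  · rw [key, RMatrix.Qmap_starComul hR]
end
end

section
/- Let (H, R) be a quasitriangular Hopf algebra over a field k and V a quantum commutative left H-module algebra. In the smash product V#H define α : V → V#H, α(v) = v⊗1, and β : V → V#H, β(v) = Σ (R²·v)⊗R¹. Then β is an algebra anti-homomorphism (β(vw) = β(w)β(v) and β(1) = 1⊗1) and α(v)β(w) = β(w)α(v) for all v, w ∈ V. -/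
open TensorProduct LinearMap

noncomputable section

section Smash

variable {k H V : Type*} [Field k] [Ring H] [HopfAlgebra k H] [Ring V] [Algebra k V]

/-- `V` is a left `H`-module algebra under the (`k`-bilinear) action `α`:
`1·v = v`, `(gh)·v = g·(h·v)`, `h·1 = ε(h)1` and `h·(vw) = Σ (h₁·v)(h₂·w)`. -/
def IsModuleAlgebra (α : H →ₗ[k] V →ₗ[k] V) : Prop :=
  (∀ v : V, α 1 v = v)
  ∧ (∀ (g h : H) (v : V), α (g * h) v = α g (α h v))
  ∧ (∀ h : H, α h 1 = Coalgebra.counit (R := k) h • (1 : V))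
  ∧ (∀ (h : H) (v w : V) (n : ℕ) (h₁ h₂ : Fin n → H),
      Coalgebra.comul (R := k) h = ∑ i, h₁ i ⊗ₜ[k] h₂ i →
      α h (v * w) = ∑ i, α (h₁ i) v * α (h₂ i) w)

/-- `V` is quantum commutative: `v w = Σ (R²·w)(R¹·v)`. -/
def IsQuantumCommutative (α : H →ₗ[k] V →ₗ[k] V) (R : H ⊗[k] H) : Prop :=
  ∀ (v w : V) (n : ℕ) (R₁ R₂ : Fin n → H),
    R = ∑ i, R₁ i ⊗ₜ[k] R₂ i →
    v * w = ∑ i, α (R₂ i) w * α (R₁ i) v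

/-- `m` is the multiplication of the smash product `V # H`:
`(v ⊗ h)(v' ⊗ h') = Σ v (h₁·v') ⊗ h₂ h'`. -/
def IsSmashMul (α : H →ₗ[k] V →ₗ[k] V)
    (m : V ⊗[k] H →ₗ[k] V ⊗[k] H →ₗ[k] V ⊗[k] H) : Prop :=
  ∀ (v v' : V) (h h' : H) (n : ℕ) (h₁ h₂ : Fin n → H),
    Coalgebra.comul (R := k) h = ∑ i, h₁ i ⊗ₜ[k] h₂ i →
    m (v ⊗ₜ[k] h) (v' ⊗ₜ[k] h')
      = ∑ i, (v * α (h₁ i) v') ⊗ₜ[k] (h₂ i * h')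

/-- The map `β : V → V # H`, `β(v) = Σ (R²·v) ⊗ R¹`. -/
def betaMap (α : H →ₗ[k] V →ₗ[k] V) (R : H ⊗[k] H) (v : V) : V ⊗[k] H :=
  (TensorProduct.comm k H V) (LinearMap.lTensor H (α.flip v) R)

end Smash

section Lemmas

/-- Every tensor is a sum of pure tensors indexed by some `Fin n`. -/
lemma exists_fin_sum_tmul {k M N : Type*} [CommRing k] [AddCommGroup M] [Module k M]
    [AddCommGroup N] [Module k N] (t : M ⊗[k] N) :
    ∃ (n : ℕ) (x : Fin n → M) (y : Fin n → N), t = ∑ i, x i ⊗ₜ[k] y i := by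
  induction t with
  | zero => exact ⟨0, 0, 0, by simp⟩
  | tmul x y => exact ⟨1, fun _ => x, fun _ => y, by simp⟩
  | add s t hs ht =>
    obtain ⟨p, x, y, rfl⟩ := hs
    obtain ⟨q, x', y', rfl⟩ := ht
    exact ⟨p + q, Fin.append x x', Fin.append y y', by simp [Fin.sum_univ_add]⟩

/-- An R-matrix satisfies `(id ⊗ ε)(R) = 1`. -/
lemma IsRMatrix.lTensor_counit {k H : Type*} [Field k] [Ring H] [Bialgebra k H]
    {R : H ⊗[k] H} (hR : IsRMatrix k H R) :
    lTensor H (Coalgebra.counit (R := k) (A := H)) R = (1 : H) ⊗ₜ[k] (1 : k) := by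
  obtain ⟨hu, -, h, -⟩ := hR
  set x : H := TensorProduct.rid k H (lTensor H (Coalgebra.counit (R := k) (A := H)) R) with hx
  suffices hx1 : x = 1 by
    apply (TensorProduct.rid k H).injective
    rw [← hx, hx1]
    simp
  have key : R = (x ⊗ₜ[k] (1 : H)) * R := by
    have h' := congrArg (lTensor H ((TensorProduct.rid k H).toLinearMap ∘ₗ
      lTensor H (Coalgebra.counit (R := k) (A := H)))) h
    have hl : lTensor H ((TensorProduct.rid k H).toLinearMap ∘ₗ
        lTensor H (Coalgebra.counit (R := k) (A := H)))
        (lTensor H (Coalgebra.comul (R := k) (A := H)) R) = R := by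
      rw [← LinearMap.comp_apply, ← lTensor_comp]
      have : ((TensorProduct.rid k H).toLinearMap ∘ₗ
          lTensor H (Coalgebra.counit (R := k) (A := H))) ∘ₗ
          Coalgebra.comul (R := k) (A := H) = LinearMap.id := by
        ext a
        simp
      rw [this, lTensor_id, LinearMap.id_apply]
    rw [hl] at h'
    refine h'.trans ?_
    rw [hx]
    clear_value x
    clear h h' hl hx hu
    obtain ⟨n, a, b, rfl⟩ := exists_fin_sum_tmul R
    simp [leg13, leg12, TensorProduct.sum_tmul, Finset.sum_mul_sum, TensorProduct.smul_tmul']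
  have hone : x ⊗ₜ[k] (1 : H) = 1 := hu.mul_right_cancel (by rw [← key, one_mul])
  have := congrArg (fun t => TensorProduct.rid k H
    (lTensor H (Coalgebra.counit (R := k) (A := H)) t)) hone
  simpa [Algebra.TensorProduct.one_def] using this

variable {k H V : Type*} [Field k] [Ring H] [HopfAlgebra k H] [Ring V] [Algebra k V]
  {α : H →ₗ[k] V →ₗ[k] V} {R : H ⊗[k] H}
  {m : V ⊗[k] H →ₗ[k] V ⊗[k] H →ₗ[k] V ⊗[k] H}

lemma betaMap_sum {n : ℕ} (a b : Fin n → H) (v : V) :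
    betaMap α (∑ i, a i ⊗ₜ[k] b i) v = ∑ i, α (b i) v ⊗ₜ[k] a i := by
  simp [betaMap]

/-- The linear map `p ⊗ q ⊗ r ↦ (r·w)(p·x) ⊗ q h`. -/
def smashTwist (α : H →ₗ[k] V →ₗ[k] V) (w x : V) (h : H) :
    H ⊗[k] (H ⊗[k] H) →ₗ[k] V ⊗[k] H :=
  TensorProduct.map
      (LinearMap.mul' k V ∘ₗ (TensorProduct.comm k V V).toLinearMap ∘ₗ
        TensorProduct.map (α.flip x) (α.flip w))
      (LinearMap.mulRight k h)
    ∘ₗ (TensorProduct.assoc k H H H).symm.toLinearMap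
    ∘ₗ lTensor H (TensorProduct.comm k H H).toLinearMap

@[simp]
lemma smashTwist_tmul (w x : V) (h p q r : H) :
    smashTwist α w x h (p ⊗ₜ[k] (q ⊗ₜ[k] r)) = (α r w * α p x) ⊗ₜ[k] (q * h) := by
  simp [smashTwist]

lemma IsSmashMul.betaMap_mul_tmul (hm : IsSmashMul α m) (w x : V) (h : H) :
    m (betaMap α R w) (x ⊗ₜ[k] h) = smashTwist α w x h
      (TensorProduct.assoc k H H H (rTensor H (Coalgebra.comul (R := k) (A := H)) R)) := by
  induction R with
  | zero => simp [betaMap]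
  | add s t hs ht => simpa [betaMap] using congrArg₂ (· + ·) hs ht
  | tmul a b =>
    obtain ⟨n, a₁, a₂, ha⟩ := exists_fin_sum_tmul (k := k) (Coalgebra.comul (R := k) a)
    simp [betaMap, hm _ x a h n a₁ a₂ ha, ha, TensorProduct.sum_tmul]

/-- Over a quantum commutative module algebra, `β(w) (x ⊗ h) = Σ x (R²·w) ⊗ R¹ h`. -/
lemma IsSmashMul.betaMap_mul_tmul_of_quantumCommutative (hm : IsSmashMul α m)
    (hR : IsRMatrix k H R) (hα : IsModuleAlgebra α) (hqc : IsQuantumCommutative α R)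
    (w x : V) (h : H) :
    m (betaMap α R w) (x ⊗ₜ[k] h) =
      TensorProduct.map (LinearMap.mulLeft k x) (LinearMap.mulRight k h) (betaMap α R w) := by
  rw [hm.betaMap_mul_tmul, hR.2.1]
  obtain ⟨n, a, b, rfl⟩ := exists_fin_sum_tmul R
  have hq : ∀ y : V, x * y = ∑ i, α (b i) y * α (a i) x := fun y => hqc x y n a b rfl
  simp only [betaMap_sum, leg13, leg12, leg23, TensorProduct.sum_tmul, TensorProduct.tmul_sum,
    map_sum, TensorProduct.assoc_tmul, lTensor_tmul, LinearEquiv.coe_coe,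
    TensorProduct.comm_tmul, Finset.sum_mul_sum, Algebra.TensorProduct.tmul_mul_tmul, mul_one,
    one_mul, smashTwist_tmul, hα.2.1, TensorProduct.map_tmul, LinearMap.mulLeft_apply,
    LinearMap.mulRight_apply, hq]
  rw [Finset.sum_comm]

lemma IsSmashMul.tmul_one_mul (hm : IsSmashMul α m) (hα : IsModuleAlgebra α) (v : V)
    (z : V ⊗[k] H) :
    m (v ⊗ₜ[k] (1 : H)) z = rTensor H (LinearMap.mulLeft k v) z := by
  induction z with
  | zero => simp
  | add s t hs ht => simp [hs, ht]
  | tmul y h =>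
    rw [hm v y 1 h 1 (fun _ => 1) (fun _ => 1) (by simp [Algebra.TensorProduct.one_def])]
    simp [hα.1]

/-- `h·(vw)` as the image of `Δ(h)` under a linear map. -/
lemma IsModuleAlgebra.flip_mul (hα : IsModuleAlgebra α) (v w : V) :
    α.flip (v * w) = LinearMap.mul' k V ∘ₗ TensorProduct.map (α.flip v) (α.flip w) ∘ₗ
      Coalgebra.comul (R := k) (A := H) := by
  ext h
  obtain ⟨n, h₁, h₂, hh⟩ := exists_fin_sum_tmul (k := k) (Coalgebra.comul (R := k) h)
  simp [hα.2.2.2 h v w n h₁ h₂ hh, hh]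

lemma IsModuleAlgebra.flip_one (hα : IsModuleAlgebra α) :
    α.flip 1 = LinearMap.toSpanSingleton k V 1 ∘ₗ Coalgebra.counit (R := k) (A := H) := by
  ext h
  simp [hα.2.2.1]

end Lemmas

/-- Let `(H, R)` be a quasitriangular Hopf algebra over a field `k` and
`V` a quantum commutative left `H`-module algebra.  In the smash product `V # H` define
`α(v) = v ⊗ 1` and `β(v) = Σ (R²·v) ⊗ R¹`.  Then `β` is an algebra anti-homomorphism
(`β(vw) = β(w)β(v)` and `β(1) = 1 ⊗ 1`) and `α(v)β(w) = β(w)α(v)` for all `v, w ∈ V`. -/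
theorem beta_antihom_and_commutes
    {k H V : Type*} [Field k] [Ring H] [HopfAlgebra k H] [Ring V] [Algebra k V]
    (R : H ⊗[k] H) (hR : IsRMatrix k H R)
    (α : H →ₗ[k] V →ₗ[k] V) (hα : IsModuleAlgebra α)
    (hqc : IsQuantumCommutative α R)
    (m : V ⊗[k] H →ₗ[k] V ⊗[k] H →ₗ[k] V ⊗[k] H) (hm : IsSmashMul α m) :
    (∀ v w : V, betaMap α R (v * w) = m (betaMap α R w) (betaMap α R v))
    ∧ betaMap α R 1 = (1 : V) ⊗ₜ[k] (1 : H)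
    ∧ (∀ v w : V,
        m (v ⊗ₜ[k] (1 : H)) (betaMap α R w) = m (betaMap α R w) (v ⊗ₜ[k] (1 : H))) := by
  refine ⟨fun v w => ?_, ?_, fun v w => ?_⟩
  · have hl : betaMap α R (v * w) = TensorProduct.comm k H V
        (lTensor H (LinearMap.mul' k V ∘ₗ TensorProduct.map (α.flip v) (α.flip w))
          (leg13 k H R * leg12 k H R)) := by
      rw [← hR.2.2.1, betaMap, hα.flip_mul, ← LinearMap.comp_assoc, lTensor_comp,
        LinearMap.comp_apply]
    have hr := fun x h => hm.betaMap_mul_tmul_of_quantumCommutative hR hα hqc w x h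
    rw [hl]
    obtain ⟨n, a, b, rfl⟩ := exists_fin_sum_tmul R
    rw [betaMap_sum a b v, map_sum]
    simp only [hr]
    simp [betaMap_sum, leg13, leg12, TensorProduct.sum_tmul, Finset.sum_mul_sum]
    rw [Finset.sum_comm]
  · rw [betaMap, hα.flip_one, lTensor_comp, LinearMap.comp_apply, hR.lTensor_counit]
    simp
  · rw [hm.tmul_one_mul hα, hm.betaMap_mul_tmul_of_quantumCommutative hR hα hqc,
      LinearMap.mulRight_one]
    rfl
end
end

section
/- Let (H, R) be a quasitriangular Hopf algebra over a field k with bijective antipode S, V a quantum commutative left H-module algebra, d₀ = Σ S²(R¹)R² ∈ H, β : V → V#H, β(v) = Σ (R²·v)⊗R¹, and τ : V#H → V#H, τ(v⊗l) = (1⊗S(l))β(d₀·v). Then τ∘β = α, i.e. for every v ∈ V, Σ (1⊗S(R¹))β(d₀R²·v) = v⊗1 in V#H. -/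
open TensorProduct LinearMap

noncomputable section

open Coalgebra HopfAlgebra

section RMatrix

variable {k H : Type*} [Field k] [Ring H]

section Bialgebra

variable [Bialgebra k H] {n : ℕ} {x y : Fin n → H}

theorem IsRMatrix.sum_comul_tmul (hR : IsRMatrix k H (∑ i, x i ⊗ₜ[k] y i)) :
    ∑ i, comul (R := k) (x i) ⊗ₜ[k] y i =
      ∑ i, ∑ j, (x i ⊗ₜ[k] x j) ⊗ₜ[k] (y i * y j) := by
  apply (TensorProduct.assoc k H H H).injective
  simpa [leg13, leg12, leg23, Finset.sum_mul_sum, TensorProduct.tmul_sum,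
    TensorProduct.sum_tmul] using hR.2.1

theorem IsRMatrix.sum_tmul_comul (hR : IsRMatrix k H (∑ i, x i ⊗ₜ[k] y i)) :
    ∑ i, x i ⊗ₜ[k] comul (R := k) (y i) =
      ∑ i, ∑ j, (x i * x j) ⊗ₜ[k] (y j ⊗ₜ[k] y i) := by
  simpa [leg13, leg12, leg23, Finset.sum_mul_sum, TensorProduct.tmul_sum,
    TensorProduct.sum_tmul] using hR.2.2.1

theorem IsRMatrix.sum_counit_smul_left (hR : IsRMatrix k H (∑ i, x i ⊗ₜ[k] y i)) :
    ∑ i, counit (R := k) (x i) • y i = 1 := by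
  have h := congrArg (rTensor H ((TensorProduct.lid k H).toLinearMap ∘ₗ rTensor H counit))
    hR.sum_comul_tmul
  simp only [map_sum, rTensor_tmul, comp_apply, rTensor_counit_comul, LinearEquiv.coe_coe,
    TensorProduct.lid_tmul, one_smul] at h
  have h' : (1 : H ⊗[k] H) * ∑ i, x i ⊗ₜ[k] y i =
      ((1 : H) ⊗ₜ[k] ∑ i, counit (R := k) (x i) • y i) * ∑ i, x i ⊗ₜ[k] y i := by
    rw [one_mul]
    simpa [Finset.sum_mul_sum, TensorProduct.tmul_sum, TensorProduct.smul_tmul] using h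
  simpa [Algebra.TensorProduct.one_def] using congrArg (mul' k H) (hR.1.mul_right_cancel h').symm

theorem IsRMatrix.sum_counit_smul_right (hR : IsRMatrix k H (∑ i, x i ⊗ₜ[k] y i)) :
    ∑ i, counit (R := k) (y i) • x i = 1 := by
  have h := congrArg (lTensor H ((TensorProduct.rid k H).toLinearMap ∘ₗ lTensor H counit))
    hR.sum_tmul_comul
  simp only [map_sum, lTensor_tmul, comp_apply, lTensor_counit_comul, LinearEquiv.coe_coe,
    TensorProduct.rid_tmul, one_smul] at h
  have h' : (1 : H ⊗[k] H) * ∑ i, x i ⊗ₜ[k] y i =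
      ((∑ i, counit (R := k) (y i) • x i) ⊗ₜ[k] (1 : H)) * ∑ i, x i ⊗ₜ[k] y i := by
    rw [one_mul]
    simpa [Finset.sum_mul_sum, TensorProduct.sum_tmul, TensorProduct.smul_tmul'] using h
  simpa [Algebra.TensorProduct.one_def] using congrArg (mul' k H) (hR.1.mul_right_cancel h').symm

end Bialgebra

variable [HopfAlgebra k H]

local notation "𝑺" => antipode k (A := H)

variable {n : ℕ} {x y : Fin n → H}

theorem IsRMatrix.antipode_left_mul (hR : IsRMatrix k H (∑ i, x i ⊗ₜ[k] y i)) :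
    (∑ i, 𝑺 (x i) ⊗ₜ[k] y i) * ∑ i, x i ⊗ₜ[k] y i = 1 := by
  have h := congrArg (rTensor H (mul' k H ∘ₗ rTensor H 𝑺)) hR.sum_comul_tmul
  simp only [map_sum, rTensor_tmul, comp_apply, mul_antipode_rTensor_comul_apply, mul'_apply] at h
  rw [Finset.sum_mul_sum]
  simp only [Algebra.TensorProduct.tmul_mul_tmul]
  rw [← h]
  simp only [Algebra.algebraMap_eq_smul_one, TensorProduct.smul_tmul]
  rw [← TensorProduct.tmul_sum, hR.sum_counit_smul_left, Algebra.TensorProduct.one_def]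

theorem IsRMatrix.mul_antipode_left (hR : IsRMatrix k H (∑ i, x i ⊗ₜ[k] y i)) :
    (∑ i, x i ⊗ₜ[k] y i) * ∑ i, 𝑺 (x i) ⊗ₜ[k] y i = 1 := by
  have h := congrArg (rTensor H (mul' k H ∘ₗ lTensor H 𝑺)) hR.sum_comul_tmul
  simp only [map_sum, rTensor_tmul, lTensor_tmul, comp_apply, mul_antipode_lTensor_comul_apply,
    mul'_apply] at h
  rw [Finset.sum_mul_sum]
  simp only [Algebra.TensorProduct.tmul_mul_tmul]
  rw [← h]
  simp only [Algebra.algebraMap_eq_smul_one, TensorProduct.smul_tmul]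
  rw [← TensorProduct.tmul_sum, hR.sum_counit_smul_left, Algebra.TensorProduct.one_def]

theorem IsRMatrix.sum_mul_tmul_antipode_mul (hR : IsRMatrix k H (∑ i, x i ⊗ₜ[k] y i)) :
    ∑ i, ∑ j, (x i * x j) ⊗ₜ[k] (𝑺 (y j) * y i) = 1 := by
  have h := congrArg (lTensor H (mul' k H ∘ₗ rTensor H 𝑺)) hR.sum_tmul_comul
  simp only [map_sum, rTensor_tmul, lTensor_tmul, comp_apply, mul_antipode_rTensor_comul_apply,
    mul'_apply] at h
  rw [← h]
  simp only [Algebra.algebraMap_eq_smul_one, ← TensorProduct.smul_tmul]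
  rw [← TensorProduct.sum_tmul, hR.sum_counit_smul_right, Algebra.TensorProduct.one_def]

theorem IsRMatrix.sum_mul_tmul_mul_antipode (hR : IsRMatrix k H (∑ i, x i ⊗ₜ[k] y i)) :
    ∑ i, ∑ j, (x i * x j) ⊗ₜ[k] (y j * 𝑺 (y i)) = 1 := by
  have h := congrArg (lTensor H (mul' k H ∘ₗ lTensor H 𝑺)) hR.sum_tmul_comul
  simp only [map_sum, lTensor_tmul, comp_apply, mul_antipode_lTensor_comul_apply,
    mul'_apply] at h
  rw [← h]
  simp only [Algebra.algebraMap_eq_smul_one, ← TensorProduct.smul_tmul]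
  rw [← TensorProduct.sum_tmul, hR.sum_counit_smul_right, Algebra.TensorProduct.one_def]

/-- An R-matrix is invariant under `S ⊗ S`. -/
theorem IsRMatrix.sum_antipode_tmul_antipode (hR : IsRMatrix k H (∑ i, x i ⊗ₜ[k] y i)) :
    ∑ i, 𝑺 (x i) ⊗ₜ[k] 𝑺 (y i) = ∑ i, x i ⊗ₜ[k] y i := by
  refine left_inv_eq_right_inv (a := ∑ i, 𝑺 (x i) ⊗ₜ[k] y i) ?_ hR.antipode_left_mul
  have h := congrArg (rTensor H 𝑺) hR.sum_mul_tmul_antipode_mul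
  rw [Finset.sum_mul_sum, Finset.sum_comm]
  simpa [antipode_mul_antidistrib, Algebra.TensorProduct.one_def] using h

theorem IsRMatrix.sum_map_antipode {W : Type*} [AddCommGroup W] [Module k W]
    (hR : IsRMatrix k H (∑ i, x i ⊗ₜ[k] y i)) (f : H →ₗ[k] H →ₗ[k] W) :
    ∑ i, f (𝑺 (x i)) (𝑺 (y i)) = ∑ i, f (x i) (y i) := by
  simpa using congrArg (TensorProduct.lift f) hR.sum_antipode_tmul_antipode

theorem IsRMatrix.sum_comul_antipode_tmul (hR : IsRMatrix k H (∑ i, x i ⊗ₜ[k] y i)) :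
    ∑ i, comul (R := k) (𝑺 (x i)) ⊗ₜ[k] y i =
      ∑ i, ∑ j, (𝑺 (x j) ⊗ₜ[k] 𝑺 (x i)) ⊗ₜ[k] (y i * y j) := by
  let Φ := Algebra.TensorProduct.map (Bialgebra.comulAlgHom k H) (AlgHom.id k H)
  let A := Algebra.TensorProduct.map
    (Algebra.TensorProduct.includeLeft (R := k) (S := k) (A := H) (B := H)) (AlgHom.id k H)
  let B := Algebra.TensorProduct.map
    (Algebra.TensorProduct.includeRight (R := k) (A := H) (B := H)) (AlgHom.id k H)
  have hΦ : Φ (∑ i, x i ⊗ₜ[k] y i) =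
      A (∑ i, x i ⊗ₜ[k] y i) * B (∑ i, x i ⊗ₜ[k] y i) := by
    simpa [Φ, A, B, Finset.sum_mul_sum] using hR.sum_comul_tmul
  have key : Φ (∑ i, 𝑺 (x i) ⊗ₜ[k] y i) =
      B (∑ i, 𝑺 (x i) ⊗ₜ[k] y i) * A (∑ i, 𝑺 (x i) ⊗ₜ[k] y i) := by
    refine left_inv_eq_right_inv (a := Φ (∑ i, x i ⊗ₜ[k] y i)) ?_ ?_
    · rw [← map_mul, hR.antipode_left_mul, map_one]
    · rw [hΦ, mul_assoc, ← mul_assoc (B _) (B _), ← map_mul B, hR.mul_antipode_left, map_one,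
        one_mul, ← map_mul, hR.mul_antipode_left, map_one]
  simpa [Φ, A, B, Finset.sum_mul_sum] using key

/-- The element `Σ R¹ S(R²)` intertwines `S²` with the identity. -/
theorem IsRMatrix.sum_mul_antipode_mul (hR : IsRMatrix k H (∑ i, x i ⊗ₜ[k] y i)) (h : H) :
    (∑ i, x i * 𝑺 (y i)) * 𝑺 (𝑺 h) = h * ∑ i, x i * 𝑺 (y i) := by
  set v := ∑ i, x i * 𝑺 (y i) with hv
  let F : H ⊗[k] H →ₗ[k] H :=
    mul' k H ∘ₗ map (mulRight k v) 𝑺 ∘ₗ (TensorProduct.comm k H H).toLinearMap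
  have hF (a b : H) : F (a ⊗ₜ b) = b * v * 𝑺 a := rfl
  have hFcomul (h : H) : F (comul h) = counit (R := k) h • v := by
    have e := congrArg (mul' k H ∘ₗ lTensor H 𝑺) (hR.2.2.2 h)
    have e₁ (t : H ⊗[k] H) : (mul' k H ∘ₗ lTensor H 𝑺)
        (TensorProduct.comm k H H t * ∑ i, x i ⊗ₜ[k] y i) = F t := by
      induction t with
      | zero => simp
      | add s t hs ht => rw [map_add, add_mul, map_add, hs, ht, map_add]
      | tmul a b =>
        simp [hF, hv, Finset.mul_sum, Finset.sum_mul, antipode_mul_antidistrib, mul_assoc]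
    have e₂ (t : H ⊗[k] H) : (mul' k H ∘ₗ lTensor H 𝑺) ((∑ i, x i ⊗ₜ[k] y i) * t) =
        ∑ i, x i * mul' k H (lTensor H 𝑺 t) * 𝑺 (y i) := by
      induction t with
      | zero => simp
      | add s t hs ht =>
        rw [mul_add, map_add, hs, ht]
        simp [mul_add, add_mul, Finset.sum_add_distrib]
      | tmul a b => simp [Finset.sum_mul, antipode_mul_antidistrib, mul_assoc]
    rw [e₁, e₂] at e
    rw [e]
    simp [hv, Algebra.algebraMap_eq_smul_one, Finset.smul_sum]
  let G : H ⊗[k] (H ⊗[k] H) →ₗ[k] H :=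
    mul' k H ∘ₗ map F (𝑺 ∘ₗ 𝑺) ∘ₗ (TensorProduct.comm k H (H ⊗[k] H)).toLinearMap
  have hG (a : H) (t : H ⊗[k] H) : G (a ⊗ₜ t) = F t * 𝑺 (𝑺 a) := rfl
  have hGassoc (t : H ⊗[k] H) (c : H) :
      G (TensorProduct.assoc k H H H (t ⊗ₜ c)) = c * v * 𝑺 (mul' k H (rTensor H 𝑺 t)) := by
    induction t with
    | zero => simp
    | add s t hs ht => simp only [TensorProduct.add_tmul, map_add, hs, ht, mul_add]
    | tmul a b => simp [hG, hF, antipode_mul_antidistrib, mul_assoc]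
  have hco := congrArg G (Coalgebra.coassoc_apply (R := k) h)
  have e := (ℛ k h).eq
  have l := congrArg (TensorProduct.lid k H) (rTensor_counit_comul (R := k) h)
  have r := congrArg (TensorProduct.rid k H) (lTensor_counit_comul (R := k) h)
  rw [← e] at hco l r
  simp only [map_sum, rTensor_tmul, lTensor_tmul, hGassoc, hG, hFcomul, TensorProduct.lid_tmul,
    TensorProduct.rid_tmul, one_smul, mul_antipode_rTensor_comul_apply,
    Algebra.algebraMap_eq_smul_one, map_smul, antipode_one, mul_smul_comm, mul_one,
    smul_mul_assoc] at hco l r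
  calc v * 𝑺 (𝑺 h)
      = ∑ i ∈ (ℛ k h).index, counit (R := k) ((ℛ k h).right i) • (v * 𝑺 (𝑺 ((ℛ k h).left i))) := by
        conv_lhs => rw [← r]
        simp [Finset.mul_sum]
    _ = h * v := by
        rw [← hco]
        conv_rhs => rw [← l]
        simp [Finset.sum_mul]

theorem IsRMatrix.sum_mul_mul_eq_one (hR : IsRMatrix k H (∑ i, x i ⊗ₜ[k] y i)) :
    ∑ j, x j * (∑ i, x i * 𝑺 (y i)) * y j = 1 := by
  have h := congrArg (mul' k H) hR.sum_mul_tmul_antipode_mul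
  simpa [Finset.mul_sum, Finset.sum_mul, mul_assoc, Algebra.TensorProduct.one_def] using h

/-- `Σ R¹ S(R²)` is a left inverse of `Σ S²(R¹) R²`. -/
theorem IsRMatrix.sum_mul_antipode_mul_drinfeld (hR : IsRMatrix k H (∑ i, x i ⊗ₜ[k] y i)) :
    (∑ i, x i * 𝑺 (y i)) * ∑ i, 𝑺 (𝑺 (x i)) * y i = 1 := by
  rw [← hR.sum_mul_mul_eq_one, Finset.mul_sum]
  simp only [← mul_assoc, hR.sum_mul_antipode_mul]

/-- `Σ R¹ S(R²)` is a right inverse of `Σ S²(R¹) R²`. -/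
theorem IsRMatrix.drinfeld_mul_sum_mul_antipode (hR : IsRMatrix k H (∑ i, x i ⊗ₜ[k] y i)) :
    (∑ i, 𝑺 (𝑺 (x i)) * y i) * ∑ i, x i * 𝑺 (y i) = 1 := by
  set v := ∑ i, x i * 𝑺 (y i) with hv
  have h₁ := hR.sum_map_antipode ((LinearMap.mul k H ∘ₗ mulRight k v).compl₁₂ 𝑺 𝑺)
  have h₂ := hR.sum_map_antipode (LinearMap.mul k H ∘ₗ mulRight k v)
  simp only [compl₁₂_apply, comp_apply, mulRight_apply, mul_apply'] at h₁ h₂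
  rw [← hR.sum_mul_mul_eq_one, ← hv, ← h₂, ← h₁, Finset.sum_mul]
  simp only [mul_assoc, hv, hR.sum_mul_antipode_mul]

/-- The element `d₀ = Σ S²(R¹) R²` implements the square of the antipode. -/
theorem IsRMatrix.drinfeld_mul (hR : IsRMatrix k H (∑ i, x i ⊗ₜ[k] y i)) (h : H) :
    (∑ i, 𝑺 (𝑺 (x i)) * y i) * h = 𝑺 (𝑺 h) * ∑ i, 𝑺 (𝑺 (x i)) * y i := by
  have e := hR.sum_mul_antipode_mul h
  have vd := hR.sum_mul_antipode_mul_drinfeld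
  have dv := hR.drinfeld_mul_sum_mul_antipode
  set v := ∑ i, x i * 𝑺 (y i)
  set d := ∑ i, 𝑺 (𝑺 (x i)) * y i
  calc d * h = d * (h * v) * d := by rw [mul_assoc, mul_assoc, vd, mul_one]
    _ = 𝑺 (𝑺 h) * d := by rw [← e, ← mul_assoc, dv, one_mul]

theorem IsRMatrix.sum_comul_antipode_mul (hR : IsRMatrix k H (∑ i, x i ⊗ₜ[k] y i)) :
    ∑ i, ∑ j, comul (R := k) (𝑺 (x i)) *
      ((y j * ((∑ l, 𝑺 (𝑺 (x l)) * y l) * y i)) ⊗ₜ[k] x j) = 1 := by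
  have comm := hR.drinfeld_mul
  have vd := hR.sum_mul_antipode_mul_drinfeld
  set d := ∑ l, 𝑺 (𝑺 (x l)) * y l
  have hv := hR.sum_map_antipode ((LinearMap.mul k H).compl₂ 𝑺)
  simp only [compl₂_apply, mul_apply'] at hv
  let G : (H ⊗[k] H) ⊗[k] H →ₗ[k] H ⊗[k] H := ∑ j, mul' k (H ⊗[k] H) ∘ₗ
    lTensor (H ⊗[k] H) ((TensorProduct.mk k H H).flip (x j) ∘ₗ mulLeft k (y j) ∘ₗ mulLeft k d)
  have hG (t : H ⊗[k] H) (r : H) :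
      G (t ⊗ₜ r) = ∑ j, t * ((y j * (d * r)) ⊗ₜ[k] x j) := by
    simp [G]
  have h := congrArg G hR.sum_comul_antipode_tmul
  simp only [map_sum, hG] at h
  rw [h]
  have inner (a b : H) : ∑ i, ∑ l, (a * (y l * (𝑺 (𝑺 (y i)) * b))) ⊗ₜ[k] (𝑺 (x i) * x l) =
      (a * b) ⊗ₜ[k] (1 : H) := by
    let P : H →ₗ[k] H →ₗ[k] H ⊗[k] H := ∑ l,
      ((TensorProduct.mk k H H).flip.compl₁₂ (mulRight k (x l))
        (mulLeft k a ∘ₗ mulLeft k (y l) ∘ₗ mulRight k b ∘ₗ 𝑺))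
    have hP (p q : H) : P p q = ∑ l, (a * (y l * (𝑺 q * b))) ⊗ₜ[k] (p * x l) := by
      simp [P, LinearMap.sum_apply]
    have e := hR.sum_map_antipode P
    simp only [hP] at e
    rw [e]
    have e' := congrArg (map (mulLeft k a ∘ₗ mulRight k b) LinearMap.id ∘ₗ
      (TensorProduct.comm k H H).toLinearMap) hR.sum_mul_tmul_mul_antipode
    simpa [Algebra.TensorProduct.one_def, mul_assoc] using e'
  rw [Finset.sum_comm]
  calc _ = ∑ j, ∑ i, ∑ l, (𝑺 (x j) * (y l * (𝑺 (𝑺 (y i)) * (𝑺 (𝑺 (y j)) * d)))) ⊗ₜ[k]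
          (𝑺 (x i) * x l) := by
        simp only [comm, antipode_mul_antidistrib, Algebra.TensorProduct.tmul_mul_tmul, mul_assoc]
    _ = 1 := by
        simp only [inner]
        rw [← TensorProduct.sum_tmul]
        simp only [← mul_assoc]
        rw [← Finset.sum_mul, hv, vd, Algebra.TensorProduct.one_def]

end RMatrix

theorem IsSmashMul.one_tmul_apply {k H V : Type*} [Field k] [Ring H] [HopfAlgebra k H] [Ring V]
    [Algebra k V] {α : H →ₗ[k] V →ₗ[k] V} {m : V ⊗[k] H →ₗ[k] V ⊗[k] H →ₗ[k] V ⊗[k] H}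
    (hm : IsSmashMul α m) (h h' : H) (v : V) :
    m (1 ⊗ₜ h) (v ⊗ₜ h') = map (α.flip v) (mulRight k h') (comul (R := k) h) := by
  have e := (ℛ k h).eq
  rw [← Finset.sum_coe_sort, ← (ℛ k h).index.equivFin.symm.sum_comp] at e
  rw [hm _ _ _ _ _ _ _ e.symm, ← e]
  simp

/-- Let `(H, R)` be a quasitriangular Hopf algebra over a field `k`
with bijective antipode `S`, `V` a quantum commutative left `H`-module algebra,
`d₀ = Σ S²(R¹)R² ∈ H`, `β(v) = Σ (R²·v) ⊗ R¹` and
`τ : V#H → V#H`, `τ(v ⊗ l) = (1 ⊗ S(l)) β(d₀·v)`.  Then `τ ∘ β = α`, i.e. for every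
`v ∈ V`, `Σ (1 ⊗ S(R¹)) β(d₀ R²·v) = v ⊗ 1` in `V # H`. -/
theorem tau_comp_beta_eq_alpha
    {k H V : Type*} [Field k] [Ring H] [HopfAlgebra k H] [Ring V] [Algebra k V]
    (hS : Function.Bijective (HopfAlgebra.antipode (R := k) (A := H)))
    (R : H ⊗[k] H) (hR : IsRMatrix k H R)
    (α : H →ₗ[k] V →ₗ[k] V) (hα : IsModuleAlgebra α)
    (hqc : IsQuantumCommutative α R)
    (m : V ⊗[k] H →ₗ[k] V ⊗[k] H →ₗ[k] V ⊗[k] H) (hm : IsSmashMul α m) :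
    ∀ (v : V) (n : ℕ) (R₁ R₂ : Fin n → H),
      R = ∑ i, R₁ i ⊗ₜ[k] R₂ i →
      ∑ i, m ((1 : V) ⊗ₜ[k] HopfAlgebra.antipode (R := k) (R₁ i))
          (betaMap α R (α
            (LinearMap.mul' k H
              (TensorProduct.map
                ((HopfAlgebra.antipode (R := k) (A := H))
                  ∘ₗ (HopfAlgebra.antipode (R := k) (A := H)))
                LinearMap.id R)
             * R₂ i) v))
        = v ⊗ₜ[k] (1 : H) := by
  rintro v n x y rfl
  have h := congrArg (map (α.flip v) LinearMap.id) hR.sum_comul_antipode_mul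
  simp only [Algebra.TensorProduct.one_def, map_tmul, flip_apply, hα.1, id_apply, map_sum] at h
  rw [← h]
  refine Finset.sum_congr rfl fun i _ ↦ ?_
  simp only [betaMap, map_sum, lTensor_tmul, flip_apply, TensorProduct.comm_tmul, map_tmul,
    comp_apply, id_apply, mul'_apply, hm.one_tmul_apply]
  refine Finset.sum_congr rfl fun j _ ↦ ?_
  rw [← hα.2.1]
  generalize comul (R := k) (antipode k (x i)) = t
  induction t with
  | zero => simp
  | add s t hs ht => simp only [add_mul, map_add, hs, ht]
  | tmul a b => simp [hα.2.1]
end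
end
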